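/- Let R be a commutative ring, L an invertible R-module, and F, F' finitely generated projective R-modules of rank 2 with F ≅ Hom_R(F', L). Then F ≅ F' ⊗_R Hom_R(det F', L). -/

import Mathlib

/-!
For `M` of constant rank `n + 1`, plugging a vector into the first slot gives an isomorphism
`M ⊗ Altⁿ⁺¹(M, L) → Altⁿ(M, L)` for every module `L`; the theorem is the case `n = 1`.
Choose `bᵢ : M` and `eᵢ : M*` with `x = ∑ᵢ eᵢ(x) bᵢ`, and write `ι_m` for contraction with `m`. The
inverse is `k ↦ ∑ᵢ bᵢ ⊗ (eᵢ ∧ k)`. Everything follows from `ι_m (e ∧ k) = e(m) k - e ∧ ι_m k`: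

* on `Altⁿ⁺¹` we have `e ∧ k = 0` for degree reasons, so `e ∧ ι_m k = e(m) k`;
* on `Altⁿ` the sum `∑ᵢ ι_{bᵢ} (eᵢ ∧ k)` is `(∑ᵢ eᵢ(bᵢ) - n) k`, and `∑ᵢ eᵢ(bᵢ) = n + 1` is the
  rank of `M`, being the trace of its identity.

The vanishing of `e ∧ k` and the value of the trace are local statements. Rather than localizing all
the modules involved, they are transported along maps `M ⇄ Rʳ` whose composites are multiplication
by some `s` outside a given prime.
-/

open TensorProduct

/-- The second exterior power of a module, as a submodule of the exterior algebra. -/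
noncomputable def detMod (R M : Type*) [CommRing R] [AddCommGroup M] [Module R M] :
    Submodule R (ExteriorAlgebra R M) :=
  LinearMap.range (ExteriorAlgebra.ι R (M := M)) ^ 2

section Localization

variable {R M N : Type*} [CommRing R] [AddCommGroup M] [Module R M] [AddCommGroup N] [Module R N]

variable (R) in
theorem eq_of_forall_maximalSpectrum_exists_smul_eq {x y : M}
    (h : ∀ p : MaximalSpectrum R, ∃ s ∉ p.asIdeal, s • x = s • y) : x = y := by
  suffices Module.eqIdeal R x y = ⊤ by
    simpa [Module.eqIdeal] using (Ideal.eq_top_iff_one _).mp this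
  by_contra hne
  obtain ⟨P, hP, hle⟩ := Ideal.exists_le_maximal _ hne
  obtain ⟨s, hs, hxy⟩ := h ⟨P, hP⟩
  exact hs (hle hxy)

theorem exists_comp_eq_smul_id_of_isLocalizedModule_equiv
    [Module.FinitePresentation R M] [Module.FinitePresentation R N] (S : Submonoid R)
    {M' N' : Type*} [AddCommGroup M'] [Module R M'] [AddCommGroup N'] [Module R N']
    (f : M →ₗ[R] M') [IsLocalizedModule S f] (g : N →ₗ[R] N') [IsLocalizedModule S g]
    (e : M' ≃ₗ[R] N') :
    ∃ s ∈ S, ∃ (φ : M →ₗ[R] N) (ψ : N →ₗ[R] M),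
      ψ ∘ₗ φ = s • LinearMap.id ∧ φ ∘ₗ ψ = s • LinearMap.id := by
  obtain ⟨φ, a, hφ⟩ :=
    Module.FinitePresentation.exists_lift_of_isLocalizedModule S g (e.toLinearMap ∘ₗ f)
  obtain ⟨ψ, b, hψ⟩ :=
    Module.FinitePresentation.exists_lift_of_isLocalizedModule S f (e.symm.toLinearMap ∘ₗ g)
  replace hφ (x) : g (φ x) = a • e (f x) := congr($hφ x)
  replace hψ (y) : f (ψ y) = b • e.symm (g y) := congr($hψ y)
  have hf : f ∘ₗ ψ ∘ₗ φ = f ∘ₗ ((a * b) • LinearMap.id) := by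
    ext x
    simp [hφ, hψ, Submonoid.smul_def, smul_smul, mul_comm]
  have hg : g ∘ₗ φ ∘ₗ ψ = g ∘ₗ ((a * b) • LinearMap.id) := by
    ext y
    simp [hφ, hψ, Submonoid.smul_def, smul_smul]
  obtain ⟨c, hc⟩ := Module.Finite.exists_smul_of_comp_eq_of_isLocalizedModule S f _ _ hf
  obtain ⟨d, hd⟩ := Module.Finite.exists_smul_of_comp_eq_of_isLocalizedModule S g _ _ hg
  refine ⟨(c * d * (a * b) : S), SetLike.coe_mem _, (c * d) • φ, ψ, ?_, ?_⟩
  · rw [LinearMap.comp_smul, mul_comm c d, mul_smul, hc, smul_smul, smul_smul]; rfl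
  · rw [LinearMap.smul_comp, mul_smul, hd, smul_smul, smul_smul]; rfl

theorem exists_comp_eq_smul_id_of_rankAtStalk_eq
    [Module.Finite R M] [Module.Projective R M] [Module.Finite R N] [Module.Projective R N]
    {p : PrimeSpectrum R} (h : Module.rankAtStalk M p = Module.rankAtStalk N p) :
    ∃ s ∉ p.asIdeal, ∃ (φ : M →ₗ[R] N) (ψ : N →ₗ[R] M),
      ψ ∘ₗ φ = s • LinearMap.id ∧ φ ∘ₗ ψ = s • LinearMap.id := by
  let S := p.asIdeal.primeCompl
  let Rp := Localization.AtPrime p.asIdeal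
  have : Module.Free Rp (LocalizedModule S M) := Module.free_of_flat_of_isLocalRing
  have : Module.Free Rp (LocalizedModule S N) := Module.free_of_flat_of_isLocalRing
  let e : LocalizedModule S M ≃ₗ[Rp] LocalizedModule S N := LinearEquiv.ofFinrankEq _ _ h
  have := Module.finitePresentation_of_projective R M
  have := Module.finitePresentation_of_projective R N
  exact exists_comp_eq_smul_id_of_isLocalizedModule_equiv S (LocalizedModule.mkLinearMap S M)
    (LocalizedModule.mkLinearMap S N) (e.restrictScalars R)

theorem trace_comp_eq_of_rankAtStalk_eq
    [Module.Finite R M] [Module.Projective R M] [Module.Finite R N] [Module.Free R N] {r : ℕ}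
    (hM : ∀ p : PrimeSpectrum R, Module.rankAtStalk M p = r)
    {f : N →ₗ[R] M} {g : M →ₗ[R] N} (hfg : f ∘ₗ g = LinearMap.id) :
    LinearMap.trace R N (g ∘ₗ f) = r := by
  refine eq_of_forall_maximalSpectrum_exists_smul_eq R fun p ↦ ?_
  have : Nontrivial R := PrimeSpectrum.nonempty_iff_nontrivial.mp ⟨p.toPrimeSpectrum⟩
  obtain ⟨s, hs, φ, ψ, hψφ, hφψ⟩ := exists_comp_eq_smul_id_of_rankAtStalk_eq
    (M := M) (N := Fin r → R) (p := p.toPrimeSpectrum) (by simp [hM])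
  refine ⟨s, hs, ?_⟩
  calc s • LinearMap.trace R N (g ∘ₗ f)
      = LinearMap.trace R N ((g ∘ₗ ψ) ∘ₗ (φ ∘ₗ f)) := by
        rw [LinearMap.comp_assoc, ← LinearMap.comp_assoc f φ ψ, hψφ, LinearMap.smul_comp,
          LinearMap.comp_smul, map_smul, LinearMap.id_comp]
    _ = LinearMap.trace R (Fin r → R) ((φ ∘ₗ f) ∘ₗ (g ∘ₗ ψ)) := LinearMap.trace_comp_comm' ..
    _ = s • (r : R) := by
        rw [LinearMap.comp_assoc, ← LinearMap.comp_assoc ψ g f, hfg, LinearMap.id_comp, hφψ,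
          map_smul, LinearMap.trace_id, Module.finrank_fin_fun]

theorem alternatingMap_eq_zero_of_rankAtStalk_lt_card [Module.Finite R M] [Module.Projective R M]
    {ι : Type*} [Fintype ι]
    (hM : ∀ p : PrimeSpectrum R, Module.rankAtStalk M p < Fintype.card ι) (f : M [⋀^ι]→ₗ[R] N) :
    f = 0 := by
  ext v
  refine eq_of_forall_maximalSpectrum_exists_smul_eq R fun p ↦ ?_
  have : Nontrivial R := PrimeSpectrum.nonempty_iff_nontrivial.mp ⟨p.toPrimeSpectrum⟩
  obtain ⟨s, hs, φ, ψ, hψφ, -⟩ := exists_comp_eq_smul_id_of_rankAtStalk_eq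
    (M := M) (N := Fin (Module.rankAtStalk M p.toPrimeSpectrum) → R) (p := p.toPrimeSpectrum)
    (by simp)
  have hψ : f.compLinearMap ψ = 0 := by
    refine Module.Basis.ext_alternating (Pi.basisFun R _) fun i hi ↦ ?_
    exact absurd (Fintype.card_le_of_injective i hi) (by simpa using hM p.toPrimeSpectrum)
  refine ⟨s ^ Fintype.card ι, fun h ↦ hs (p.isMaximal.isPrime.mem_of_pow_mem _ h), ?_⟩
  calc s ^ Fintype.card ι • f v = f fun i ↦ s • v i := by
        simpa using (f.map_smul_univ (fun _ ↦ s) v).symm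
    _ = f.compLinearMap ψ fun i ↦ φ (v i) := by
        simp [← LinearMap.comp_apply, hψφ]
    _ = s ^ Fintype.card ι • (0 : M [⋀^ι]→ₗ[R] N) v := by simp [hψ]

end Localization

section DualSystem

variable {R M : Type*} [CommRing R] [AddCommGroup M] [Module R M]

variable (R M) in
theorem exists_sum_dual_apply_smul_eq [Module.Finite R M] [Module.Projective R M] :
    ∃ (n : ℕ) (b : Fin n → M) (e : Fin n → Module.Dual R M), ∀ x, ∑ i, e i x • b i = x := by
  obtain ⟨n, f, g, -, -, hfg⟩ := Module.Finite.exists_comp_eq_id_of_projective R M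
  refine ⟨n, fun i ↦ f (Pi.single i 1), fun i ↦ LinearMap.proj i ∘ₗ g, fun x ↦ ?_⟩
  calc ∑ i, g x i • f (Pi.single i 1) = f (g x) := by
        simp_rw [← map_smul, ← map_sum, ← pi_eq_sum_univ']
    _ = x := congr($hfg x)

theorem sum_dual_apply_self_eq_of_rankAtStalk_eq [Module.Finite R M] [Module.Projective R M] {r : ℕ}
    (hM : ∀ p : PrimeSpectrum R, Module.rankAtStalk M p = r) {ι : Type*} [Fintype ι]
    {b : ι → M} {e : ι → Module.Dual R M} (h : ∀ x, ∑ i, e i x • b i = x) :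
    ∑ i, e i (b i) = r := by
  classical
  rw [← trace_comp_eq_of_rankAtStalk_eq hM
    (f := Fintype.linearCombination R b) (g := LinearMap.pi e)
    (by ext x; simp [Fintype.linearCombination_apply, h]),
    LinearMap.trace_eq_matrix_trace R (Pi.basisFun R ι)]
  simp [Matrix.trace]

end DualSystem

section Contraction

variable {R M L : Type*} [CommRing R] [AddCommGroup M] [Module R M] [AddCommGroup L] [Module R L]
  {n : ℕ}

/-- Left exterior multiplication `k ↦ e ∧ k` of alternating forms by a linear form `e`, from which
the inverse of `contraction` is built. It is unnormalized (no factorials), so that it makes sense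
over every commutative ring. -/
def wedgeLeft (e : Module.Dual R M) : M [⋀^Fin n]→ₗ[R] L →ₗ[R] M [⋀^Fin (n + 1)]→ₗ[R] L :=
  AlternatingMap.alternatizeUncurryFinLM ∘ₗ LinearMap.smulRightₗ e

theorem wedgeLeft_apply (e : Module.Dual R M) (k : M [⋀^Fin n]→ₗ[R] L) (v : Fin (n + 1) → M) :
    wedgeLeft e k v = ∑ i : Fin (n + 1), (-1) ^ (i : ℕ) • e (v i) • k (i.removeNth v) :=
  AlternatingMap.alternatizeUncurryFin_apply _ v

theorem curryLeft_wedgeLeft_zero (e : Module.Dual R M) (k : M [⋀^Fin 0]→ₗ[R] L) (m : M) :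
    (wedgeLeft e k).curryLeft m = e m • k := by
  ext v
  simp [wedgeLeft_apply, Matrix.vecCons]

theorem curryLeft_wedgeLeft (e : Module.Dual R M) (k : M [⋀^Fin (n + 1)]→ₗ[R] L) (m : M) :
    (wedgeLeft e k).curryLeft m = e m • k - wedgeLeft e (k.curryLeft m) := by
  have removeNth_succ_vecCons (i : Fin (n + 1)) (v : Fin (n + 1) → M) :
      i.succ.removeNth (Matrix.vecCons m v) = Matrix.vecCons m (i.removeNth v) := by
    ext j
    cases j using Fin.cases <;> simp [Fin.removeNth_apply]
  ext v
  simp [wedgeLeft_apply, Fin.sum_univ_succ (n := n + 1), removeNth_succ_vecCons, pow_succ,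
    sub_eq_add_neg]

theorem sum_wedgeLeft_curryLeft {ι : Type*} [Fintype ι] {b : ι → M} {e : ι → Module.Dual R M}
    (h : ∀ x, ∑ i, e i x • b i = x) (k : M [⋀^Fin (n + 1)]→ₗ[R] L) :
    ∑ i, wedgeLeft (e i) (k.curryLeft (b i)) = (n + 1) • k := by
  have hk : ∑ i, LinearMap.smulRightₗ (e i) (k.curryLeft (b i)) = k.curryLeft := by
    ext x : 1
    conv_rhs => rw [← h x]
    simp
  calc ∑ i, wedgeLeft (e i) (k.curryLeft (b i))
      = AlternatingMap.alternatizeUncurryFinLM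
          (∑ i, LinearMap.smulRightₗ (e i) (k.curryLeft (b i))) := by
        simp only [wedgeLeft, LinearMap.comp_apply, map_sum]
    _ = AlternatingMap.alternatizeUncurryFin k.curryLeft := by
        rw [hk, AlternatingMap.alternatizeUncurryFinLM_apply]
    _ = (n + 1) • k := AlternatingMap.alternatizeUncurryFin_curryLeft k

theorem sum_curryLeft_wedgeLeft {ι : Type*} [Fintype ι] {b : ι → M} {e : ι → Module.Dual R M}
    (h : ∀ x, ∑ i, e i x • b i = x) (k : M [⋀^Fin n]→ₗ[R] L) :
    ∑ i, (wedgeLeft (e i) k).curryLeft (b i) = (∑ i, e i (b i)) • k - n • k := by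
  cases n with
  | zero => simp [curryLeft_wedgeLeft_zero, Finset.sum_smul]
  | succ n => simp [curryLeft_wedgeLeft, Finset.sum_smul, ← sum_wedgeLeft_curryLeft h k]

theorem wedgeLeft_curryLeft_of_rankAtStalk_le [Module.Finite R M] [Module.Projective R M]
    (hM : ∀ p : PrimeSpectrum R, Module.rankAtStalk M p ≤ n + 1) (e : Module.Dual R M)
    (k : M [⋀^Fin (n + 1)]→ₗ[R] L) (m : M) : wedgeLeft e (k.curryLeft m) = e m • k := by
  have hek : wedgeLeft e k = 0 :=
    alternatingMap_eq_zero_of_rankAtStalk_lt_card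
      (fun p ↦ by simpa using Nat.lt_succ_of_le (hM p)) _
  have := curryLeft_wedgeLeft e k m
  rw [hek, AlternatingMap.curryLeft_zero, LinearMap.zero_apply] at this
  exact (sub_eq_zero.mp this.symm).symm

variable (R M L n) in
/-- The interior product `m ⊗ k ↦ k(m, -, …, -)`, linearized over `M ⊗ Altⁿ⁺¹(M, L)`. It is an
isomorphism when `M` has constant rank `n + 1`; for `n = 1` it is the one used in `stmt4`. -/
def contraction : M ⊗[R] (M [⋀^Fin (n + 1)]→ₗ[R] L) →ₗ[R] M [⋀^Fin n]→ₗ[R] L :=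
  TensorProduct.lift AlternatingMap.curryLeftLinearMap.flip

theorem contraction_tmul (m : M) (k : M [⋀^Fin (n + 1)]→ₗ[R] L) :
    contraction R M L n (m ⊗ₜ k) = k.curryLeft m :=
  rfl

theorem contraction_bijective [Module.Finite R M] [Module.Projective R M]
    (hM : ∀ p : PrimeSpectrum R, Module.rankAtStalk M p = n + 1) :
    Function.Bijective (contraction R M L n) := by
  obtain ⟨d, b, e, h⟩ := exists_sum_dual_apply_smul_eq R M
  let ψ : M [⋀^Fin n]→ₗ[R] L →ₗ[R] M ⊗[R] (M [⋀^Fin (n + 1)]→ₗ[R] L) :=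
    ∑ i, TensorProduct.mk R _ _ (b i) ∘ₗ wedgeLeft (e i)
  have left_inv : ψ ∘ₗ contraction R M L n = LinearMap.id := by
    refine TensorProduct.ext' fun m k ↦ ?_
    calc ψ (contraction R M L n (m ⊗ₜ k)) = ∑ i, b i ⊗ₜ (e i m • k) := by
          simp [ψ, contraction_tmul, wedgeLeft_curryLeft_of_rankAtStalk_le fun p ↦ (hM p).le]
      _ = m ⊗ₜ k := by
          simp_rw [← TensorProduct.smul_tmul, ← TensorProduct.sum_tmul, h]
  have right_inv : contraction R M L n ∘ₗ ψ = LinearMap.id := by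
    ext1 k
    calc contraction R M L n (ψ k) = ∑ i, (wedgeLeft (e i) k).curryLeft (b i) := by
          simp [ψ, contraction_tmul]
      _ = ((n + 1 : ℕ) : R) • k - n • k := by
          rw [sum_curryLeft_wedgeLeft h, sum_dual_apply_self_eq_of_rankAtStalk_eq hM h]
      _ = k := by
          rw [Nat.cast_smul_eq_nsmul, succ_nsmul, add_sub_cancel_left]
  exact Function.bijective_iff_has_inverse.mpr
    ⟨ψ, fun x ↦ congr($left_inv x), fun k ↦ congr($right_inv k)⟩

end Contraction

theorem stmt4_general {R M L : Type*} [CommRing R] [AddCommGroup M] [Module R M]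
    [Module.Finite R M] [Module.Projective R M] [AddCommGroup L] [Module R L] {n : ℕ}
    (hM : ∀ p : PrimeSpectrum R, Module.rankAtStalk M p = n + 1) :
    Nonempty ((⋀[R]^n M →ₗ[R] L) ≃ₗ[R] M ⊗[R] (⋀[R]^(n + 1) M →ₗ[R] L)) :=
  ⟨exteriorPower.alternatingMapLinearEquiv.symm ≪≫ₗ
    (LinearEquiv.ofBijective _ (contraction_bijective hM)).symm ≪≫ₗ
    exteriorPower.alternatingMapLinearEquiv.lTensor M⟩

/-- If `F ≅ Hom_R(F', L)` with `F`, `F'` finitely generated projective of rank 2 and `L`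
invertible, then `F ≅ F' ⊗_R Hom_R(det F', L)`. -/
theorem stmt4 (R : Type*) [CommRing R]
    (F F' L : Type*) [AddCommGroup F] [Module R F] [AddCommGroup F'] [Module R F']
    [AddCommGroup L] [Module R L]
    [Module.Finite R F] [Module.Projective R F]
    [Module.Finite R F'] [Module.Projective R F']
    [Module.Finite R L] [Module.Projective R L]
    (hF : ∀ p : PrimeSpectrum R, Module.rankAtStalk F p = 2)
    (hF' : ∀ p : PrimeSpectrum R, Module.rankAtStalk F' p = 2)
    (hL : ∀ p : PrimeSpectrum R, Module.rankAtStalk L p = 1)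
    (h : Nonempty (F ≃ₗ[R] (F' →ₗ[R] L))) :
    Nonempty (F ≃ₗ[R] (F' ⊗[R] (↥(detMod R F') →ₗ[R] L))) := by
  exact h.map2 (fun e c ↦ e ≪≫ₗ (exteriorPower.oneEquiv R F').symm.congrLeft L R ≪≫ₗ c)
    (stmt4_general (n := 1) (L := L) hF')
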